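/- arXiv:1809.01313 — 2 statements merged into one kernel-verified Lean document; each statement's English description precedes it below -/
import Mathlib

section
/- Let p ≥ 2 and let f be a complex-valued harmonic function on the unit disk belonging to the harmonic Hardy space h^p. Then for all real t, ∫_{-1}^{1} |f(x e^{it})|^p dx ≤ ∫₀^{2π} |f(e^{iθ})|^p dθ. -/
open Complex MeasureTheory Real Filter

open scoped ENNReal Topology in
/-- **Schur test** in `L²`, with a single weight `v` on the target side. -/
theorem lintegral_sq_lintegral_kernel_le {α β : Type*} [MeasurableSpace α] [MeasurableSpace β]
    {μ : Measure α} {ν : Measure β} [SFinite μ] [SFinite ν]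
    {K : α → β → ℝ≥0∞} (hK : Measurable (Function.uncurry K))
    {v : α → ℝ≥0∞} (hv : Measurable v)
    (hw : ∀ᵐ b ∂ν, ∫⁻ a, K a b * v a ∂μ ≠ 0 ∧ ∫⁻ a, K a b * v a ∂μ ≠ ∞)
    (hKw : ∀ᵐ a ∂μ, ∫⁻ b, K a b * ∫⁻ a', K a' b * v a' ∂μ ∂ν ≤ v a)
    {φ : β → ℝ≥0∞} (hφ : AEMeasurable φ ν) :
    ∫⁻ a, (∫⁻ b, K a b * φ b ∂ν) ^ 2 ∂μ ≤ ∫⁻ b, φ b ^ 2 ∂ν := by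
  wlog hφm : Measurable φ generalizing φ
  · have h := this hφ.measurable_mk.aemeasurable hφ.measurable_mk
    have e : ∀ a, ∫⁻ b, K a b * φ b ∂ν = ∫⁻ b, K a b * hφ.mk φ b ∂ν := fun a =>
      lintegral_congr_ae (hφ.ae_eq_mk.mono fun b hb => by simp only [hb])
    have e2 : ∫⁻ b, φ b ^ 2 ∂ν = ∫⁻ b, hφ.mk φ b ^ 2 ∂ν :=
      lintegral_congr_ae (hφ.ae_eq_mk.mono fun b hb => by simp only [hb])
    simpa only [e, e2] using h
  set w : β → ℝ≥0∞ := fun b => ∫⁻ a, K a b * v a ∂μ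
  have hKl : ∀ a, Measurable (K a) := fun a => hK.comp measurable_prodMk_left
  have hwm : Measurable w := by
    refine Measurable.lintegral_prod_left ?_
    exact hK.mul (hv.comp measurable_fst)
  have sq_rpow : ∀ z : ℝ≥0∞, (z ^ (1 / 2 : ℝ)) ^ (2 : ℝ) = z := fun z => by
    rw [← ENNReal.rpow_mul]; norm_num
  have key : ∀ᵐ a ∂μ, (∫⁻ b, K a b * φ b ∂ν) ^ 2
      ≤ ∫⁻ b, v a * (K a b * (φ b ^ 2 / w b)) ∂ν := by
    filter_upwards [hKw] with a ha
    have e1 : ∫⁻ b, K a b * φ b ∂ν = ∫⁻ b, ((fun b => (K a b * w b) ^ (1 / 2 : ℝ)) *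
        (fun b => (K a b * (φ b ^ 2 / w b)) ^ (1 / 2 : ℝ))) b ∂ν := by
      refine lintegral_congr_ae (hw.mono fun b hb => ?_)
      simp only [Pi.mul_apply]
      rw [← ENNReal.mul_rpow_of_nonneg _ _ (by norm_num : (0 : ℝ) ≤ 1 / 2)]
      have : K a b * w b * (K a b * (φ b ^ 2 / w b)) = (K a b * φ b) ^ (2 : ℝ) := by
        rw [ENNReal.rpow_two, div_eq_mul_inv]
        calc _ = (K a b * φ b) ^ 2 * (w b * (w b)⁻¹) := by ring
          _ = _ := by rw [ENNReal.mul_inv_cancel hb.1 hb.2, mul_one]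
      rw [this, ← ENNReal.rpow_mul]; norm_num
    have hm : Measurable fun b => K a b * (φ b ^ 2 / w b) :=
      (hKl a).mul ((hφm.pow_const 2).div hwm)
    have h2 := ENNReal.lintegral_mul_le_Lp_mul_Lq ν Real.HolderConjugate.two_two
      (f := fun b => (K a b * w b) ^ (1 / 2 : ℝ))
      (g := fun b => (K a b * (φ b ^ 2 / w b)) ^ (1 / 2 : ℝ))
      (((hKl a).mul hwm).pow_const _).aemeasurable
      (hm.pow_const _).aemeasurable
    rw [← e1] at h2
    simp only [sq_rpow] at h2
    calc (∫⁻ b, K a b * φ b ∂ν) ^ 2 ≤ _ := pow_le_pow_left' h2 2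
      _ = (∫⁻ b, K a b * w b ∂ν) * ∫⁻ b, K a b * (φ b ^ 2 / w b) ∂ν := by
        rw [mul_pow, ← ENNReal.rpow_two, ← ENNReal.rpow_two, sq_rpow, sq_rpow]
      _ ≤ v a * ∫⁻ b, K a b * (φ b ^ 2 / w b) ∂ν := by gcongr
      _ = _ := (lintegral_const_mul _ hm).symm
  calc ∫⁻ a, (∫⁻ b, K a b * φ b ∂ν) ^ 2 ∂μ
      ≤ ∫⁻ a, ∫⁻ b, v a * (K a b * (φ b ^ 2 / w b)) ∂ν ∂μ := lintegral_mono_ae key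
    _ = ∫⁻ b, ∫⁻ a, v a * (K a b * (φ b ^ 2 / w b)) ∂μ ∂ν := by
      refine lintegral_lintegral_swap (Measurable.aemeasurable ?_)
      exact (hv.comp measurable_fst).mul
        (hK.mul (((hφm.pow_const 2).div hwm).comp measurable_snd))
    _ = ∫⁻ b, φ b ^ 2 ∂ν := by
      refine lintegral_congr_ae (hw.mono fun b hb => ?_)
      have : ∀ a, v a * (K a b * (φ b ^ 2 / w b)) = K a b * v a * (φ b ^ 2 / w b) :=
        fun a => by ring
      simp only [this]
      have hm : Measurable fun a => K a b * v a := (hK.comp measurable_prodMk_right).mul hv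
      rw [lintegral_mul_const _ hm]
      exact ENNReal.mul_div_cancel hb.1 hb.2

open scoped ENNReal Topology in
/-- A sequence that is bounded in `L^p`, `p > 1`, over a finite measure and converges almost
everywhere converges in `L¹`. -/
theorem tendsto_eLpNorm_one_of_lintegral_rpow_le {α : Type*} [MeasurableSpace α]
    {E : Type*} [NormedAddCommGroup E]
    {μ : Measure α} [IsFiniteMeasure μ] {p : ℝ} (hp : 1 < p) {f : ℕ → α → E} {g : α → E}
    (hf : ∀ n, StronglyMeasurable (f n)) {C : ℝ≥0∞} (hC : C ≠ ∞)
    (hfC : ∀ n, ∫⁻ a, ‖f n a‖ₑ ^ p ∂μ ≤ C) (hg : MemLp g 1 μ)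
    (hfg : ∀ᵐ a ∂μ, Tendsto (fun n => f n a) atTop (𝓝 (g a))) :
    Tendsto (fun n => eLpNorm (f n - g) 1 μ) atTop (𝓝 0) := by
  refine tendsto_Lp_finite_of_tendsto_ae le_rfl (by simp) (fun n => (hf n).aestronglyMeasurable)
    hg ?_ hfg
  refine unifIntegrable_of le_rfl (by simp) (fun n => (hf n).aestronglyMeasurable) fun ε hε => ?_
  have hlim : Tendsto (fun M : ℝ => C.toReal * M ^ (-(p - 1))) atTop (𝓝 (C.toReal * 0)) :=
    (tendsto_rpow_neg_atTop (by linarith)).const_mul _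
  rw [mul_zero] at hlim
  obtain ⟨M, hM, hM0⟩ := ((hlim.eventually (gt_mem_nhds hε)).and (eventually_gt_atTop 0)).exists
  refine ⟨⟨M, hM0.le⟩, fun n => ?_⟩
  rw [eLpNorm_one_eq_lintegral_enorm]
  calc ∫⁻ a, ‖{x | (⟨M, hM0.le⟩ : NNReal) ≤ ‖f n x‖₊}.indicator (f n) a‖ₑ ∂μ
      ≤ ∫⁻ a, ENNReal.ofReal (M ^ (-(p - 1))) * ‖f n a‖ₑ ^ p ∂μ := by
        refine lintegral_mono fun a => ?_
        by_cases ha : a ∈ {x | (⟨M, hM0.le⟩ : NNReal) ≤ ‖f n x‖₊}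
        · rw [Set.indicator_of_mem ha]
          have ha' : M ≤ ‖f n a‖ := ha
          have h0 : 0 < ‖f n a‖ := hM0.trans_le ha'
          rw [← ofReal_norm, ENNReal.ofReal_rpow_of_pos h0,
            ← ENNReal.ofReal_mul (by positivity)]
          refine ENNReal.ofReal_le_ofReal ?_
          rw [Real.rpow_neg hM0.le, inv_mul_eq_div, le_div_iff₀ (by positivity)]
          calc ‖f n a‖ * M ^ (p - 1) ≤ ‖f n a‖ * ‖f n a‖ ^ (p - 1) := by
                gcongr
            _ = ‖f n a‖ ^ p := by
                rw [← Real.rpow_one_add' h0.le (by linarith)]; ring_nf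
        · rw [Set.indicator_of_notMem ha]; simp
    _ = ENNReal.ofReal (M ^ (-(p - 1))) * ∫⁻ a, ‖f n a‖ₑ ^ p ∂μ :=
        lintegral_const_mul' _ _ ENNReal.ofReal_ne_top
    _ ≤ ENNReal.ofReal (M ^ (-(p - 1))) * C := by gcongr; exact hfC n
    _ = ENNReal.ofReal (C.toReal * M ^ (-(p - 1))) := by
        rw [mul_comm, ENNReal.ofReal_mul ENNReal.toReal_nonneg, ENNReal.ofReal_toReal hC]
    _ ≤ ENNReal.ofReal ε := ENNReal.ofReal_le_ofReal hM.le

open scoped ENNReal in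
/-- Jensen's inequality for a density of total mass one. -/
theorem rpow_lintegral_mul_le {α : Type*} [MeasurableSpace α] {μ : Measure α} {q : ℝ} (hq : 1 ≤ q)
    {k φ : α → ℝ≥0∞} (hk : Measurable k) (hk1 : ∫⁻ a, k a ∂μ = 1) (hφ : AEMeasurable φ μ) :
    (∫⁻ a, k a * φ a ∂μ) ^ q ≤ ∫⁻ a, k a * φ a ^ q ∂μ := by
  have : IsProbabilityMeasure (μ.withDensity k) := ⟨by simpa using hk1⟩
  have hφ' : AEMeasurable φ (μ.withDensity k) :=
    hφ.mono_ac (withDensity_absolutelyContinuous μ k)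
  have h := eLpNorm'_le_eLpNorm'_of_exponent_le one_pos hq (μ.withDensity k)
    hφ'.aestronglyMeasurable
  simp only [eLpNorm', enorm_eq_self, ENNReal.rpow_one, div_one] at h
  rw [lintegral_withDensity_eq_lintegral_mul₀ hk.aemeasurable hφ,
    lintegral_withDensity_eq_lintegral_mul₀ hk.aemeasurable (hφ.pow_const q),
    one_div, ENNReal.le_rpow_inv_iff (by linarith)] at h
  exact h

/-- The Poisson kernel on the diameter `{x * c | -1 < x < 1}` of the unit disk, as a density in the
boundary angle. -/
noncomputable def diameterPoissonKernel (c : ℂ) (x θ : ℝ) : ℝ :=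
  (2 * π)⁻¹ * poissonKernel 0 (x * c) (circleMap 0 1 θ)

theorem mul_mem_ball_of_norm_one {c : ℂ} (hc : ‖c‖ = 1) {x : ℝ} (hx : x ∈ Set.Ioo (-1 : ℝ) 1) :
    (x : ℂ) * c ∈ Metric.ball (0 : ℂ) 1 := by
  simpa [hc, abs_lt] using hx

theorem diameterPoissonKernel_pos {c : ℂ} (hc : ‖c‖ = 1) {x : ℝ} (hx : x ∈ Set.Ioo (-1 : ℝ) 1)
    (θ : ℝ) : 0 < diameterPoissonKernel c x θ := by
  have h := mul_mem_ball_of_norm_one hc hx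
  have hne : circleMap 0 1 θ - x * c ≠ 0 := sub_ne_zero.2 (circleMap_ne_mem_ball h θ)
  rw [mem_ball_zero_iff] at h
  unfold diameterPoissonKernel
  rw [poissonKernel_def]
  simp only [sub_zero, norm_circleMap_zero, abs_one]
  have : 0 < ‖circleMap 0 1 θ - x * c‖ := norm_pos_iff.2 hne
  have : 0 < 1 ^ 2 - ‖(x : ℂ) * c‖ ^ 2 := by nlinarith [norm_nonneg ((x : ℂ) * c)]
  positivity

theorem continuous_diameterPoissonKernel {c : ℂ} (hc : ‖c‖ = 1) {x : ℝ}
    (hx : x ∈ Set.Ioo (-1 : ℝ) 1) : Continuous (diameterPoissonKernel c x) := by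
  have hne : ∀ θ, ‖circleMap 0 1 θ - x * c‖ ^ 2 ≠ 0 := fun θ =>
    pow_ne_zero 2 (norm_ne_zero_iff.2
      (sub_ne_zero.2 (circleMap_ne_mem_ball (mul_mem_ball_of_norm_one hc hx) θ)))
  unfold diameterPoissonKernel poissonKernel
  simp only [sub_zero]
  exact continuous_const.mul (Continuous.div (by fun_prop) (by fun_prop) hne)

theorem measurable_diameterPoissonKernel (c : ℂ) :
    Measurable fun q : ℝ × ℝ => diameterPoissonKernel c q.1 q.2 := by
  unfold diameterPoissonKernel poissonKernel
  simp only [sub_zero]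
  fun_prop

/-- **Poisson integral formula** on a diameter. -/
theorem integral_diameterPoissonKernel_smul {c : ℂ} (hc : ‖c‖ = 1) {x : ℝ}
    (hx : x ∈ Set.Ioo (-1 : ℝ) 1) {u : ℂ → ℂ} (hu : DiffContOnCl ℂ u (Metric.ball 0 1)) :
    ∫ θ in (0 : ℝ)..2 * π, diameterPoissonKernel c x θ • u (circleMap 0 1 θ) = u (x * c) := by
  rw [← hu.circleAverage_poissonKernel_smul (mul_mem_ball_of_norm_one hc hx), circleAverage_def,
    ← intervalIntegral.integral_smul]
  simp [diameterPoissonKernel, mul_assoc]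

theorem integral_diameterPoissonKernel {c : ℂ} (hc : ‖c‖ = 1) {x : ℝ}
    (hx : x ∈ Set.Ioo (-1 : ℝ) 1) :
    ∫ θ in (0 : ℝ)..2 * π, diameterPoissonKernel c x θ = 1 := by
  have h := integral_diameterPoissonKernel_smul hc hx
    (diffContOnCl_const (c := (1 : ℂ)))
  simp only [real_smul, mul_one] at h
  rw [intervalIntegral.integral_ofReal] at h
  exact_mod_cast h

theorem integral_diameterPoissonKernel_mul {c : ℂ} (hc : ‖c‖ = 1) {x y : ℝ}
    (hx : x ∈ Set.Ioo (-1 : ℝ) 1) (hy : y ∈ Set.Ioo (-1 : ℝ) 1) :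
    ∫ θ in (0 : ℝ)..2 * π, diameterPoissonKernel c x θ * diameterPoissonKernel c y θ
      = (2 * π)⁻¹ * ((1 + x * y) / (1 - x * y)) := by
  set a : ℂ := y * starRingEnd ℂ c with ha
  have hna : ‖a‖ < 1 := by simpa [ha, hc, abs_lt] using hy
  have hca : c * starRingEnd ℂ c = 1 := by
    rw [Complex.mul_conj, Complex.normSq_eq_norm_sq, hc]; simp
  have hne : ∀ z : ℂ, ‖z‖ ≤ 1 → 1 - a * z ≠ 0 := fun z hz h => by
    have : ‖a * z‖ = 1 := by rw [← sub_eq_zero.1 h, norm_one]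
    rw [norm_mul] at this
    nlinarith [norm_nonneg a, norm_nonneg z]
  have hu : DiffContOnCl ℂ (fun z => (1 + a * z) / (1 - a * z)) (Metric.ball 0 1) := by
    apply DifferentiableOn.diffContOnCl
    rw [closure_ball 0 one_ne_zero]
    refine DifferentiableOn.div (by fun_prop) (by fun_prop) fun z hz => hne z ?_
    simpa using hz
  have h := congrArg Complex.re (integral_diameterPoissonKernel_smul hc hx hu)
  have hc1 : ∀ θ, ((1 + a * circleMap 0 1 θ) / (1 - a * circleMap 0 1 θ)).re
      = poissonKernel 0 (y * c) (circleMap 0 1 θ) := fun θ => by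
    have hz : circleMap 0 1 θ * starRingEnd ℂ (circleMap 0 1 θ) = 1 := by
      rw [Complex.mul_conj, Complex.normSq_eq_norm_sq]; simp
    have hz0 : circleMap 0 1 θ ≠ 0 := left_ne_zero_of_mul_eq_one hz
    rw [poissonKernel_eq_re_herglotzRieszKernel, Function.comp_apply, herglotzRieszKernel_def,
      ← Complex.conj_re]
    congr 1
    simp only [map_div₀, map_add, map_sub, map_mul, map_one, ha, Complex.conj_conj,
      Complex.conj_ofReal, sub_zero]
    have hz' : starRingEnd ℂ (circleMap 0 1 θ) = (circleMap 0 1 θ)⁻¹ :=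
      eq_inv_of_mul_eq_one_right hz
    rw [hz', ← mul_div_mul_left (1 + _) _ hz0]
    congr 1 <;> field_simp
  have hcont : Continuous fun θ => diameterPoissonKernel c x θ •
      ((1 + a * circleMap 0 1 θ) / (1 - a * circleMap 0 1 θ)) :=
    (continuous_diameterPoissonKernel hc hx).smul
      (Continuous.div (by fun_prop) (by fun_prop) fun θ => hne _ (by simp))
  have hre : (∫ θ in (0 : ℝ)..2 * π, diameterPoissonKernel c x θ •
      ((1 + a * circleMap 0 1 θ) / (1 - a * circleMap 0 1 θ))).re =
      ∫ θ in (0 : ℝ)..2 * π, diameterPoissonKernel c x θ *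
        poissonKernel 0 (y * c) (circleMap 0 1 θ) := by
    rw [← Complex.reCLM_apply, ← ContinuousLinearMap.intervalIntegral_comp_comm _
      (hcont.intervalIntegrable _ _)]
    simp only [Complex.reCLM_apply, Complex.smul_re, smul_eq_mul, hc1]
  rw [hre] at h
  have haz : a * (x * c) = ((x * y : ℝ) : ℂ) := by
    rw [ha]; push_cast; linear_combination (x * y : ℂ) * hca
  have hr : ((1 + a * (x * c)) / (1 - a * (x * c))).re = (1 + x * y) / (1 - x * y) := by
    rw [haz, ← Complex.ofReal_re ((1 + x * y) / (1 - x * y))]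
    push_cast; rfl
  rw [← hr, ← h, ← intervalIntegral.integral_const_mul]
  congr 1; ext θ
  simp only [diameterPoissonKernel]; ring

theorem one_sub_mul_pos_of_mem_Ioo {x y : ℝ} (hx : x ∈ Set.Ioo (-1 : ℝ) 1)
    (hy : y ∈ Set.Icc (-1 : ℝ) 1) : 0 < 1 - x * y := by
  have := abs_lt.2 hx
  have := abs_le.2 hy
  have : |x * y| < 1 := by rw [abs_mul]; nlinarith [abs_nonneg x, abs_nonneg y]
  linarith [(abs_lt.1 this).2]

theorem hasDerivAt_arcsin_moebius {x y : ℝ} (hx : x ∈ Set.Ioo (-1 : ℝ) 1)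
    (hy : y ∈ Set.Ioo (-1 : ℝ) 1) :
    HasDerivAt (fun y => arcsin ((y - x) / (1 - x * y)))
      (√(1 - x ^ 2) * (1 - x * y)⁻¹ * (√(1 - y ^ 2))⁻¹) y := by
  have hxy := one_sub_mul_pos_of_mem_Ioo hx ⟨hy.1.le, hy.2.le⟩
  have hx2 : 0 < 1 - x ^ 2 := by nlinarith [hx.1, hx.2]
  have hy2 : 0 < 1 - y ^ 2 := by nlinarith [hy.1, hy.2]
  have h1 : -1 < (y - x) / (1 - x * y) := by
    rw [lt_div_iff₀ hxy]; nlinarith [hx.1, hx.2, hy.1, hy.2]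
  have h2 : (y - x) / (1 - x * y) < 1 := by
    rw [div_lt_one hxy]; nlinarith [hx.1, hx.2, hy.1, hy.2]
  have hd : HasDerivAt (fun y => (y - x) / (1 - x * y)) ((1 - x ^ 2) / (1 - x * y) ^ 2) y := by
    have := ((hasDerivAt_id' y).sub_const x).div
      (((hasDerivAt_id' y).const_mul x).const_sub 1) hxy.ne'
    exact this.congr_deriv (by ring)
  have hs : 1 - ((y - x) / (1 - x * y)) ^ 2 = (1 - x ^ 2) * (1 - y ^ 2) / (1 - x * y) ^ 2 := by
    have h := pow_ne_zero 2 hxy.ne'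
    rw [div_pow, eq_div_iff h, sub_mul, div_mul_cancel₀ _ h]
    ring
  refine ((Real.hasDerivAt_arcsin h1.ne' h2.ne).comp y hd).congr_deriv ?_
  rw [hs, Real.sqrt_div (by positivity), Real.sqrt_mul hx2.le, Real.sqrt_sq hxy.le]
  have e := Real.sq_sqrt hx2.le
  have hsx := Real.sqrt_pos.2 hx2
  have hsy := Real.sqrt_pos.2 hy2
  field_simp
  linear_combination -e

open scoped ENNReal in
theorem lintegral_inv_one_sub_mul_inv_sqrt {x : ℝ} (hx : x ∈ Set.Ioo (-1 : ℝ) 1) :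
    ∫⁻ y in Set.Ioo (-1 : ℝ) 1, ENNReal.ofReal ((1 - x * y)⁻¹ * (√(1 - y ^ 2))⁻¹)
      = ENNReal.ofReal (π * (√(1 - x ^ 2))⁻¹) := by
  have hx2 : 0 < √(1 - x ^ 2) := Real.sqrt_pos.2 (by nlinarith [hx.1, hx.2])
  have hcont : ContinuousOn (fun y => (√(1 - x ^ 2))⁻¹ * arcsin ((y - x) / (1 - x * y)))
      (Set.Icc (-1) 1) := by
    refine continuousOn_const.mul (Real.continuous_arcsin.comp_continuousOn
      (ContinuousOn.div (by fun_prop) (by fun_prop) fun y hy => ?_))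
    exact (one_sub_mul_pos_of_mem_Ioo hx hy).ne'
  have hd : ∀ y ∈ Set.Ioo (-1 : ℝ) 1, HasDerivAt
      (fun y => (√(1 - x ^ 2))⁻¹ * arcsin ((y - x) / (1 - x * y)))
      ((1 - x * y)⁻¹ * (√(1 - y ^ 2))⁻¹) y := fun y hy => by
    refine ((hasDerivAt_arcsin_moebius hx hy).const_mul (√(1 - x ^ 2))⁻¹).congr_deriv ?_
    field_simp
  have hpos : ∀ y ∈ Set.Ioo (-1 : ℝ) 1, 0 ≤ (1 - x * y)⁻¹ * (√(1 - y ^ 2))⁻¹ := fun y hy => by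
    have := one_sub_mul_pos_of_mem_Ioo hx ⟨hy.1.le, hy.2.le⟩
    positivity
  have hint := intervalIntegral.integrableOn_deriv_of_nonneg hcont hd hpos
  have hftc := intervalIntegral.integral_eq_sub_of_hasDerivAt_of_le (by norm_num) hcont hd
    ((intervalIntegrable_iff_integrableOn_Ioc_of_le (by norm_num)).2 hint)
  rw [intervalIntegral.integral_of_le (by norm_num), integral_Ioc_eq_integral_Ioo] at hftc
  rw [← ofReal_integral_eq_lintegral_ofReal (hint.mono_set Set.Ioo_subset_Ioc_self)
    ((ae_restrict_iff' measurableSet_Ioo).2 (.of_forall hpos)), hftc]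
  have e1 : (1 - x) / (1 - x * 1) = 1 := by rw [mul_one, div_self]; linarith [hx.2]
  have e2 : (-1 - x) / (1 - x * -1) = -1 := by
    rw [div_eq_iff (by linarith [hx.1])]; ring
  rw [e1, e2, arcsin_one, arcsin_neg_one]
  ring_nf

open scoped ENNReal in
theorem measurable_ofReal_diameterPoissonKernel (c : ℂ) : Measurable
    (Function.uncurry fun x θ => ENNReal.ofReal (diameterPoissonKernel c x θ)) :=
  (measurable_diameterPoissonKernel c).ennreal_ofReal

open scoped ENNReal in
/-- The lower-integral form of `integral_diameterPoissonKernel_mul`, as an upper bound. -/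
theorem lintegral_diameterPoissonKernel_mul_le {c : ℂ} (hc : ‖c‖ = 1) {x y : ℝ}
    (hx : x ∈ Set.Ioo (-1 : ℝ) 1) (hy : y ∈ Set.Ioo (-1 : ℝ) 1) :
    ∫⁻ θ in Set.Ioc 0 (2 * π), ENNReal.ofReal (diameterPoissonKernel c x θ) *
      ENNReal.ofReal (diameterPoissonKernel c y θ) ≤ ENNReal.ofReal (π⁻¹ * (1 - x * y)⁻¹) := by
  have hpos := one_sub_mul_pos_of_mem_Ioo hx ⟨hy.1.le, hy.2.le⟩
  simp only [← ENNReal.ofReal_mul (diameterPoissonKernel_pos hc hx _).le]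
  have hcont : Continuous fun θ => diameterPoissonKernel c x θ * diameterPoissonKernel c y θ :=
    (continuous_diameterPoissonKernel hc hx).mul (continuous_diameterPoissonKernel hc hy)
  rw [← ofReal_integral_eq_lintegral_ofReal hcont.integrableOn_Ioc
    (.of_forall fun θ => (mul_pos (diameterPoissonKernel_pos hc hx θ)
      (diameterPoissonKernel_pos hc hy θ)).le),
    ← intervalIntegral.integral_of_le (by positivity),
    integral_diameterPoissonKernel_mul hc hx hy]
  refine ENNReal.ofReal_le_ofReal ?_
  rw [div_eq_mul_inv, mul_inv, ← mul_assoc]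
  gcongr
  have := inv_pos.2 Real.pi_pos
  nlinarith

open scoped ENNReal in
theorem lintegral_diameterPoissonKernel_weight_le {c : ℂ} (hc : ‖c‖ = 1) {x : ℝ}
    (hx : x ∈ Set.Ioo (-1 : ℝ) 1) :
    ∫⁻ θ in Set.Ioc 0 (2 * π), ENNReal.ofReal (diameterPoissonKernel c x θ) *
        ∫⁻ y in Set.Ioo (-1 : ℝ) 1, ENNReal.ofReal (diameterPoissonKernel c y θ) *
          ENNReal.ofReal (√(1 - y ^ 2))⁻¹ ≤ ENNReal.ofReal (√(1 - x ^ 2))⁻¹ := by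
  have hK := measurable_ofReal_diameterPoissonKernel c
  have hv : Measurable fun x : ℝ => ENNReal.ofReal (√(1 - x ^ 2))⁻¹ := by fun_prop
  have hKx : ∀ x, Measurable fun θ => ENNReal.ofReal (diameterPoissonKernel c x θ) :=
    fun _ => hK.of_uncurry_left
  have hKv : ∀ θ, Measurable fun y => ENNReal.ofReal (diameterPoissonKernel c y θ) *
      ENNReal.ofReal (√(1 - y ^ 2))⁻¹ :=
    fun _ => hK.of_uncurry_right.mul hv
  calc _ = ∫⁻ θ in Set.Ioc 0 (2 * π), ∫⁻ y in Set.Ioo (-1 : ℝ) 1,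
        ENNReal.ofReal (diameterPoissonKernel c x θ) *
        (ENNReal.ofReal (diameterPoissonKernel c y θ) * ENNReal.ofReal (√(1 - y ^ 2))⁻¹) :=
        lintegral_congr fun θ => (lintegral_const_mul _ (hKv θ)).symm
    _ = ∫⁻ y in Set.Ioo (-1 : ℝ) 1, ∫⁻ θ in Set.Ioc 0 (2 * π),
        ENNReal.ofReal (diameterPoissonKernel c x θ) *
        (ENNReal.ofReal (diameterPoissonKernel c y θ) * ENNReal.ofReal (√(1 - y ^ 2))⁻¹) := by
        refine lintegral_lintegral_swap (Measurable.aemeasurable ?_)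
        have h1 : Measurable (Function.uncurry fun (θ _ : ℝ) =>
            ENNReal.ofReal (diameterPoissonKernel c x θ)) := (hKx x).comp measurable_fst
        have hswap : ∀ K : ℝ → ℝ → ℝ≥0∞, Measurable (Function.uncurry K) →
            Measurable (Function.uncurry fun θ y => K y θ) := fun _ h => h.comp measurable_swap
        have h2 := hswap _ hK
        exact h1.mul (h2.mul (hv.comp measurable_snd))
    _ ≤ ∫⁻ y in Set.Ioo (-1 : ℝ) 1, ENNReal.ofReal π⁻¹ *
        ENNReal.ofReal ((1 - x * y)⁻¹ * (√(1 - y ^ 2))⁻¹) := by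
        refine setLIntegral_mono' measurableSet_Ioo fun y hy => ?_
        have hpos := one_sub_mul_pos_of_mem_Ioo hx ⟨hy.1.le, hy.2.le⟩
        have hm : Measurable fun θ => ENNReal.ofReal (diameterPoissonKernel c x θ) *
          ENNReal.ofReal (diameterPoissonKernel c y θ) := (hKx x).mul (hKx y)
        simp only [← mul_assoc]
        rw [lintegral_mul_const _ hm, ENNReal.ofReal_mul (inv_pos.2 hpos).le, ← mul_assoc,
          ← ENNReal.ofReal_mul (by positivity)]
        gcongr
        exact lintegral_diameterPoissonKernel_mul_le hc hx hy
    _ = _ := by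
        rw [lintegral_const_mul' _ _ ENNReal.ofReal_ne_top,
          lintegral_inv_one_sub_mul_inv_sqrt hx, ← ENNReal.ofReal_mul (by positivity),
          inv_mul_cancel_left₀ Real.pi_ne_zero]

open scoped ENNReal in
/-- **Frazer's inequality**: the Poisson extension is a contraction from `L²` of the unit circle
to `L²` of a diameter. -/
theorem lintegral_sq_lintegral_diameterPoissonKernel_le {c : ℂ} (hc : ‖c‖ = 1) {φ : ℝ → ℝ≥0∞}
    (hφ : AEMeasurable φ (volume.restrict (Set.Ioc 0 (2 * π)))) :
    ∫⁻ x in Set.Ioo (-1 : ℝ) 1,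
        (∫⁻ θ in Set.Ioc 0 (2 * π), ENNReal.ofReal (diameterPoissonKernel c x θ) * φ θ) ^ 2
      ≤ ∫⁻ θ in Set.Ioc 0 (2 * π), φ θ ^ 2 := by
  have hK := measurable_ofReal_diameterPoissonKernel c
  have hv : Measurable fun x : ℝ => ENNReal.ofReal (√(1 - x ^ 2))⁻¹ := by fun_prop
  have hKx : ∀ x, Measurable fun θ => ENNReal.ofReal (diameterPoissonKernel c x θ) :=
    fun _ => hK.of_uncurry_left
  have hKθ : ∀ θ, Measurable fun x => ENNReal.ofReal (diameterPoissonKernel c x θ) :=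
    fun _ => hK.of_uncurry_right
  refine lintegral_sq_lintegral_kernel_le hK hv ?_
    ((ae_restrict_iff' measurableSet_Ioo).2 (.of_forall fun _ hx =>
      lintegral_diameterPoissonKernel_weight_le hc hx)) hφ
  have h0 : (0 : ℝ) ∈ Set.Ioo (-1 : ℝ) 1 := by norm_num
  have hKv : Measurable (Function.uncurry fun y θ =>
      ENNReal.ofReal (diameterPoissonKernel c y θ) * ENNReal.ofReal (√(1 - y ^ 2))⁻¹) :=
    hK.mul (hv.comp measurable_fst)
  have hw := hKv.lintegral_prod_left (μ := volume.restrict (Set.Ioo (-1) 1))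
  have hfin := ae_lt_top ((hKx 0).mul hw)
    ((lintegral_diameterPoissonKernel_weight_le hc h0).trans_lt ENNReal.ofReal_lt_top).ne
  filter_upwards [hfin] with θ hθ
  constructor
  · refine (setLIntegral_pos_iff ((hKθ θ).mul hv)).2 ?_ |>.ne'
    have : Set.Ioo (-1 : ℝ) 1 ⊆ (Function.support fun y : ℝ =>
        ENNReal.ofReal (diameterPoissonKernel c y θ) * ENNReal.ofReal (√(1 - y ^ 2))⁻¹) ∩
        Set.Ioo (-1 : ℝ) 1 := fun y hy => by
      refine ⟨mul_ne_zero ?_ ?_, hy⟩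
      · exact (ENNReal.ofReal_pos.2 (diameterPoissonKernel_pos hc hy θ)).ne'
      · exact (ENNReal.ofReal_pos.2 (inv_pos.2 (Real.sqrt_pos.2 (by nlinarith [hy.1, hy.2])))).ne'
    exact lt_of_lt_of_le (by simp) (measure_mono this)
  · intro htop
    rw [Pi.mul_apply, htop,
      ENNReal.mul_top (ENNReal.ofReal_pos.2 (diameterPoissonKernel_pos hc h0 θ)).ne'] at hθ
    exact lt_irrefl _ hθ

open scoped ENNReal in
theorem lintegral_diameterPoissonKernel {c : ℂ} (hc : ‖c‖ = 1) {x : ℝ}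
    (hx : x ∈ Set.Ioo (-1 : ℝ) 1) :
    ∫⁻ θ in Set.Ioc 0 (2 * π), ENNReal.ofReal (diameterPoissonKernel c x θ) = 1 := by
  rw [← ofReal_integral_eq_lintegral_ofReal
    (continuous_diameterPoissonKernel hc hx).integrableOn_Ioc
    (.of_forall fun θ => (diameterPoissonKernel_pos hc hx θ).le),
    ← intervalIntegral.integral_of_le (by positivity), integral_diameterPoissonKernel hc hx,
    ENNReal.ofReal_one]

open scoped ENNReal in
/-- Poisson domination for a harmonic function `h + conj g` with `h, g` analytic up to the
boundary. -/
theorem enorm_le_lintegral_diameterPoissonKernel {c : ℂ} (hc : ‖c‖ = 1) {x : ℝ}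
    (hx : x ∈ Set.Ioo (-1 : ℝ) 1) {h g : ℂ → ℂ} (hh : DiffContOnCl ℂ h (Metric.ball 0 1))
    (hg : DiffContOnCl ℂ g (Metric.ball 0 1)) :
    ‖h (x * c) + starRingEnd ℂ (g (x * c))‖ₑ ≤ ∫⁻ θ in Set.Ioc 0 (2 * π),
      ENNReal.ofReal (diameterPoissonKernel c x θ) *
        ‖h (circleMap 0 1 θ) + starRingEnd ℂ (g (circleMap 0 1 θ))‖ₑ := by
  have hcont : ∀ {u : ℂ → ℂ}, DiffContOnCl ℂ u (Metric.ball 0 1) →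
      Continuous fun θ => diameterPoissonKernel c x θ • u (circleMap 0 1 θ) := fun hu => by
    refine (continuous_diameterPoissonKernel hc hx).smul ?_
    have hu' := hu.continuousOn
    rw [closure_ball 0 one_ne_zero] at hu'
    exact hu'.comp_continuous (continuous_circleMap 0 1) fun θ =>
      circleMap_mem_closedBall 0 zero_le_one θ
  have e : h (x * c) + starRingEnd ℂ (g (x * c)) = ∫ θ in (0 : ℝ)..2 * π,
      diameterPoissonKernel c x θ •
        (h (circleMap 0 1 θ) + starRingEnd ℂ (g (circleMap 0 1 θ))) := by
    have hgc := Complex.conjCLE.toContinuousLinearMap.intervalIntegral_comp_comm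
      ((hcont hg).intervalIntegrable (μ := volume) 0 (2 * π))
    rw [← integral_diameterPoissonKernel_smul hc hx hh,
      ← integral_diameterPoissonKernel_smul hc hx hg]
    have hgcont : Continuous fun θ => diameterPoissonKernel c x θ •
        starRingEnd ℂ (g (circleMap 0 1 θ)) := by
      simpa [Function.comp_def] using Complex.continuous_conj.comp (hcont hg)
    simp only [smul_add]
    rw [intervalIntegral.integral_add ((hcont hh).intervalIntegrable _ _)
      (hgcont.intervalIntegrable _ _)]
    congr 1
    simpa using hgc.symm
  rw [e, intervalIntegral.integral_of_le (by positivity)]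
  refine (enorm_integral_le_lintegral_enorm _).trans (le_of_eq (lintegral_congr fun θ => ?_))
  rw [enorm_smul, Real.enorm_of_nonneg (diameterPoissonKernel_pos hc hx θ).le]

open scoped ENNReal Topology in
/-- If `v n` converges in `L¹` of the circle to `F` and `a n` is dominated by the Poisson integral
of `v n`, then `lim a n` is dominated by the Poisson integral of `F`. -/
theorem enorm_le_lintegral_diameterPoissonKernel_of_tendsto {c : ℂ} (hc : ‖c‖ = 1) {x : ℝ}
    (hx : x ∈ Set.Ioo (-1 : ℝ) 1) {v : ℕ → ℝ → ℂ} {F : ℝ → ℂ} {a : ℕ → ℂ} {a' : ℂ}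
    (hF : AEStronglyMeasurable F (volume.restrict (Set.Ioc 0 (2 * π))))
    (hvF : Tendsto (fun n => eLpNorm (v n - F) 1 (volume.restrict (Set.Ioc 0 (2 * π))))
      atTop (𝓝 0))
    (ha : Tendsto a atTop (𝓝 a'))
    (hav : ∀ n, ‖a n‖ₑ ≤ ∫⁻ θ in Set.Ioc 0 (2 * π),
      ENNReal.ofReal (diameterPoissonKernel c x θ) * ‖v n θ‖ₑ) :
    ‖a'‖ₑ ≤ ∫⁻ θ in Set.Ioc 0 (2 * π),
      ENNReal.ofReal (diameterPoissonKernel c x θ) * ‖F θ‖ₑ := by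
  have hcont := continuous_diameterPoissonKernel hc hx
  obtain ⟨B, hB⟩ := (isCompact_Icc (a := (0 : ℝ)) (b := 2 * π)).bddAbove_image hcont.continuousOn
  have hB' : ∀ θ ∈ Set.Ioc 0 (2 * π), diameterPoissonKernel c x θ ≤ B := fun θ hθ =>
    hB ⟨θ, ⟨hθ.1.le, hθ.2⟩, rfl⟩
  have hk : Measurable fun θ => ENNReal.ofReal (diameterPoissonKernel c x θ) :=
    hcont.measurable.ennreal_ofReal
  have hkF : AEMeasurable (fun θ => ENNReal.ofReal (diameterPoissonKernel c x θ) * ‖F θ‖ₑ)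
      (volume.restrict (Set.Ioc 0 (2 * π))) := hk.aemeasurable.mul hF.enorm
  have hlim : Tendsto (fun n => (∫⁻ θ in Set.Ioc 0 (2 * π),
      ENNReal.ofReal (diameterPoissonKernel c x θ) * ‖F θ‖ₑ) +
      ENNReal.ofReal B * eLpNorm (v n - F) 1 (volume.restrict (Set.Ioc 0 (2 * π)))) atTop
      (𝓝 (∫⁻ θ in Set.Ioc 0 (2 * π),
        ENNReal.ofReal (diameterPoissonKernel c x θ) * ‖F θ‖ₑ)) := by
    have := (ENNReal.Tendsto.const_mul hvF (Or.inr (ENNReal.ofReal_ne_top (r := B)))).const_add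
      (∫⁻ θ in Set.Ioc 0 (2 * π), ENNReal.ofReal (diameterPoissonKernel c x θ) * ‖F θ‖ₑ)
    simpa using this
  refine le_of_tendsto_of_tendsto' ((continuous_enorm.tendsto a').comp ha) hlim fun n => ?_
  refine (hav n).trans ?_
  rw [eLpNorm_one_eq_lintegral_enorm, ← lintegral_const_mul' _ _ ENNReal.ofReal_ne_top,
    ← lintegral_add_left' hkF]
  refine setLIntegral_mono' measurableSet_Ioc fun θ hθ => ?_
  calc ENNReal.ofReal (diameterPoissonKernel c x θ) * ‖v n θ‖ₑ
      ≤ ENNReal.ofReal (diameterPoissonKernel c x θ) * (‖F θ‖ₑ + ‖(v n - F) θ‖ₑ) := by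
        gcongr
        have := enorm_add_le (F θ) ((v n - F) θ)
        simpa using this
    _ ≤ _ := by
        rw [mul_add]
        gcongr
        exact hB' θ hθ

open scoped ENNReal in
/-- The `L^p` form of Frazer's inequality, for functions dominated by a Poisson integral. -/
theorem lintegral_enorm_rpow_diameter_le {c : ℂ} (hc : ‖c‖ = 1) {p : ℝ} (hp : 2 ≤ p)
    {u F : ℝ → ℂ} (hF : AEStronglyMeasurable F (volume.restrict (Set.Ioc 0 (2 * π))))
    (huF : ∀ x ∈ Set.Ioo (-1 : ℝ) 1, ‖u x‖ₑ ≤ ∫⁻ θ in Set.Ioc 0 (2 * π),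
      ENNReal.ofReal (diameterPoissonKernel c x θ) * ‖F θ‖ₑ) :
    ∫⁻ x in Set.Ioo (-1 : ℝ) 1, ‖u x‖ₑ ^ p ≤ ∫⁻ θ in Set.Ioc 0 (2 * π), ‖F θ‖ₑ ^ p := by
  have hsq : ∀ z : ℝ≥0∞, z ^ p = (z ^ (p / 2)) ^ 2 := fun z => by
    rw [← ENNReal.rpow_two, ← ENNReal.rpow_mul, div_mul_cancel₀ _ two_ne_zero]
  simp only [hsq]
  refine le_trans (setLIntegral_mono' measurableSet_Ioo fun x hx => ?_)
    (lintegral_sq_lintegral_diameterPoissonKernel_le hc (hF.enorm.pow_const (p / 2)))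
  gcongr
  calc ‖u x‖ₑ ^ (p / 2) ≤ _ := ENNReal.rpow_le_rpow (huF x hx) (by linarith)
    _ ≤ _ := rpow_lintegral_mul_le (by linarith)
        (continuous_diameterPoissonKernel hc hx).measurable.ennreal_ofReal
        (lintegral_diameterPoissonKernel hc hx) hF.enorm

/-- **Harmonic Riesz–Fejér inequality, `p ≥ 2`.** If `f = h + conj g` is a complex-valued
harmonic function on the unit disk (`h, g` analytic) belonging to the harmonic Hardy space
`h^p`, with a.e. radial boundary values `F`, then for all real `t`,
`∫_{-1}^{1} |f(x e^{it})|^p dx ≤ ∫₀^{2π} |F(θ)|^p dθ`. -/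
theorem harmonic_riesz_fejer_large_p (p : ℝ) (hp : 2 ≤ p)
    (h g f : ℂ → ℂ) (F : ℝ → ℂ)
    (hh : AnalyticOn ℂ h (Metric.ball 0 1)) (hg : AnalyticOn ℂ g (Metric.ball 0 1))
    (hf : ∀ z ∈ Metric.ball (0:ℂ) 1, f z = h z + starRingEnd ℂ (g z))
    (hHp : ∃ C : ℝ, ∀ r : ℝ, 0 ≤ r → r < 1 →
      (∫ θ in (0:ℝ)..(2 * π), ‖f ((r : ℂ) * Complex.exp (θ * Complex.I))‖ ^ p) ≤ C)
    (hF : ∀ᵐ θ : ℝ, Tendsto (fun r : ℝ => f ((r : ℂ) * Complex.exp (θ * Complex.I)))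
      (nhdsWithin 1 (Set.Iio 1)) (nhds (F θ))) (t : ℝ) :
    (∫ x in (-1:ℝ)..1, ‖f ((x : ℂ) * Complex.exp (t * Complex.I))‖ ^ p) ≤
      ∫ θ in (0:ℝ)..(2 * π), ‖F θ‖ ^ p := by
  set c : ℂ := Complex.exp (t * Complex.I)
  have hc : ‖c‖ = 1 := Complex.norm_exp_ofReal_mul_I t
  obtain ⟨C, hC⟩ := hHp
  have hfc : ContinuousOn f (Metric.ball 0 1) :=
    (hh.continuousOn.add (Complex.continuous_conj.comp_continuousOn hg.continuousOn)).congr hf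
  obtain ⟨r, -, hr, hrlim⟩ := exists_seq_strictMono_tendsto' (zero_lt_one (α := ℝ))
  have hrlim' : Tendsto r atTop (nhdsWithin 1 (Set.Iio 1)) :=
    tendsto_nhdsWithin_iff.2 ⟨hrlim, .of_forall fun n => (hr n).2⟩
  set v : ℕ → ℝ → ℂ := fun n θ => f (r n * Complex.exp (θ * Complex.I)) with hvdef
  have hvc : ∀ n, Continuous (v n) := fun n => by
    refine hfc.comp_continuous (by fun_prop) fun θ => ?_
    simpa [abs_of_pos (hr n).1] using (hr n).2
  have hvF : ∀ᵐ θ ∂volume.restrict (Set.Ioc 0 (2 * π)),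
      Tendsto (fun n => v n θ) atTop (nhds (F θ)) :=
    (ae_restrict_of_ae hF).mono fun θ hθ => hθ.comp hrlim'
  have hFm : AEStronglyMeasurable F (volume.restrict (Set.Ioc 0 (2 * π))) :=
    aestronglyMeasurable_of_tendsto_ae atTop (fun n => (hvc n).aestronglyMeasurable) hvF
  have hrpow : ∀ z : ℂ, ENNReal.ofReal (‖z‖ ^ p) = ‖z‖ₑ ^ p := fun z => by
    rw [← ENNReal.ofReal_rpow_of_nonneg (norm_nonneg z) (by linarith), ofReal_norm]
  have hvC : ∀ n, ∫⁻ θ in Set.Ioc 0 (2 * π), ‖v n θ‖ₑ ^ p ≤ ENNReal.ofReal C := fun n => by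
    have hcont : Continuous fun θ => ‖v n θ‖ ^ p :=
      (hvc n).norm.rpow_const fun _ => Or.inr (by linarith)
    have h := hC (r n) (hr n).1.le (hr n).2
    rw [intervalIntegral.integral_of_le (by positivity)] at h
    refine le_trans (le_of_eq ?_) (ENNReal.ofReal_le_ofReal h)
    rw [ofReal_integral_eq_lintegral_ofReal hcont.integrableOn_Ioc
      (.of_forall fun θ => by positivity)]
    exact lintegral_congr fun θ => (hrpow _).symm
  have hFC : ∫⁻ θ in Set.Ioc 0 (2 * π), ‖F θ‖ₑ ^ p ≤ ENNReal.ofReal C := by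
    calc ∫⁻ θ in Set.Ioc 0 (2 * π), ‖F θ‖ₑ ^ p
        = ∫⁻ θ in Set.Ioc 0 (2 * π), liminf (fun n => ‖v n θ‖ₑ ^ p) atTop :=
          lintegral_congr_ae (hvF.mono fun θ hθ =>
            (((ENNReal.continuous_rpow_const.comp continuous_enorm).tendsto _).comp
              hθ).liminf_eq.symm)
      _ ≤ liminf (fun n => ∫⁻ θ in Set.Ioc 0 (2 * π), ‖v n θ‖ₑ ^ p) atTop :=
          lintegral_liminf_le fun n => (hvc n).enorm.measurable.pow_const p
      _ ≤ ENNReal.ofReal C := (liminf_le_liminf (.of_forall hvC)).trans (by simp)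
  have hFL : MemLp F 1 (volume.restrict (Set.Ioc 0 (2 * π))) := by
    have h : MemLp F (ENNReal.ofReal p) (volume.restrict (Set.Ioc 0 (2 * π))) := by
      refine ⟨hFm, ?_⟩
      rw [eLpNorm_lt_top_iff_lintegral_rpow_enorm_lt_top
        (by simpa using by linarith) ENNReal.ofReal_ne_top,
        ENNReal.toReal_ofReal (by linarith)]
      exact hFC.trans_lt ENNReal.ofReal_lt_top
    exact h.mono_exponent (ENNReal.one_le_ofReal.2 (by linarith))
  have hvL := tendsto_eLpNorm_one_of_lintegral_rpow_le (by linarith)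
    (fun n => (hvc n).stronglyMeasurable) ENNReal.ofReal_ne_top hvC hFL hvF
  have hmem : ∀ n, ∀ z : ℂ, ‖z‖ ≤ 1 → (r n : ℂ) * z ∈ Metric.ball (0 : ℂ) 1 := fun n z hz => by
    rw [mem_ball_zero_iff, norm_mul, Complex.norm_real, Real.norm_of_nonneg (hr n).1.le]
    nlinarith [(hr n).1, (hr n).2]
  have hdil : ∀ n, ∀ {u : ℂ → ℂ}, AnalyticOn ℂ u (Metric.ball 0 1) →
      DiffContOnCl ℂ (fun z => u (r n * z)) (Metric.ball 0 1) := fun n u hu => by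
    apply DifferentiableOn.diffContOnCl
    rw [closure_ball 0 one_ne_zero]
    exact hu.differentiableOn.comp (by fun_prop) fun z hz => hmem n z (by simpa using hz)
  have hdom : ∀ x ∈ Set.Ioo (-1 : ℝ) 1, ‖f (x * c)‖ₑ ≤ ∫⁻ θ in Set.Ioc 0 (2 * π),
      ENNReal.ofReal (diameterPoissonKernel c x θ) * ‖F θ‖ₑ := fun x hx => by
    have hxc := mul_mem_ball_of_norm_one hc hx
    refine enorm_le_lintegral_diameterPoissonKernel_of_tendsto hc hx
      (a := fun n => f (r n * (x * c))) hFm hvL ?_ fun n => ?_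
    · refine (hfc.continuousAt (Metric.isOpen_ball.mem_nhds hxc)).tendsto.comp ?_
      have : Tendsto (fun n => (r n : ℂ) * (x * c)) atTop (nhds (((1 : ℝ) : ℂ) * (x * c))) :=
        ((Complex.continuous_ofReal.tendsto 1).comp hrlim).mul_const _
      simpa using this
    · have h := enorm_le_lintegral_diameterPoissonKernel hc hx (hdil n hh) (hdil n hg)
      rw [← hf _ (hmem n _ (mem_ball_zero_iff.1 hxc).le)] at h
      refine h.trans (le_of_eq (lintegral_congr fun θ => ?_))
      rw [← hf _ (hmem n _ (by simp)), hvdef, circleMap_zero, Complex.ofReal_one, one_mul]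
  have hmain := lintegral_enorm_rpow_diameter_le hc hp hFm hdom
  have hum : AEStronglyMeasurable (fun x : ℝ => ‖f (x * c)‖ ^ p)
      (volume.restrict (Set.Ioo (-1) 1)) := by
    refine ContinuousOn.aestronglyMeasurable ?_ measurableSet_Ioo
    refine ContinuousOn.rpow_const ?_ fun _ _ => Or.inr (by linarith)
    exact (hfc.comp (by fun_prop) fun x hx => mul_mem_ball_of_norm_one hc hx).norm
  have hFpm : AEStronglyMeasurable (fun θ => ‖F θ‖ ^ p)
      (volume.restrict (Set.Ioc 0 (2 * π))) :=
    (hFm.norm.aemeasurable.pow_const p).aestronglyMeasurable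
  rw [intervalIntegral.integral_of_le (by norm_num), integral_Ioc_eq_integral_Ioo,
    intervalIntegral.integral_of_le (by positivity),
    integral_eq_lintegral_of_nonneg_ae (.of_forall fun x => by positivity) hum,
    integral_eq_lintegral_of_nonneg_ae (.of_forall fun x => by positivity) hFpm]
  simp only [hrpow]
  exact ENNReal.toReal_mono (hFC.trans_lt ENNReal.ofReal_lt_top).ne hmain
end

section
/- Let f = h + conj(g) with h(z) = Σ a_k z^k and g(z) = Σ_{k≥1} b_k z^k analytic on the unit disk, and suppose f belongs to the harmonic Hardy space h². Then for all real t, ∫_{-1}^{1} |f(x e^{it})|² dx ≤ (1/2) ∫₀^{2π} |f(e^{iθ})|² dθ + 2π Re(Σ_{k≥1} a_k b_k e^{2ikt}). -/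
open Complex MeasureTheory Real Filter

theorem ae_haar_preimage {T : ℝ} [Fact (0 < T)] {p : AddCircle T → Prop}
    (hp : ∀ᵐ x ∂(AddCircle.haarAddCircle : Measure (AddCircle T)), p x) (s : ℝ) :
    ∀ᵐ θ : ℝ ∂volume.restrict (Set.Ioc s (s + T)), p (θ : AddCircle T) := by
  have h1 : ∀ᵐ x ∂(volume : Measure (AddCircle T)), p x := by
    rw [AddCircle.volume_eq_smul_haarAddCircle]
    exact Measure.ae_smul_measure hp _
  exact (AddCircle.measurePreserving_mk T s).quasiMeasurePreserving.ae h1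

theorem fourierBasis_repr_symm_ae_eq {T : ℝ} [Fact (0 < T)] {e : ℤ → ℂ}
    (he : Summable fun n => ‖e n‖)
    (E : lp (fun _ : ℤ => ℂ) 2) (hE : ∀ n, E n = e n) {φ : ℝ → ℂ}
    (hφ : ∀ θ : ℝ, HasSum (fun n : ℤ => e n * fourier n (θ : AddCircle T)) (φ θ)) (s : ℝ) :
    ∀ᵐ θ : ℝ ∂volume.restrict (Set.Ioc s (s + T)),
      ((fourierBasis (T := T)).repr.symm E) (θ : AddCircle T) = φ θ := by
  have hs : Summable fun n : ℤ => e n • fourier (T := T) n := by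
    refine Summable.of_norm ?_
    simpa [norm_smul, fourier_norm] using he
  obtain ⟨G, hG⟩ := hs
  have h1 : HasSum (fun n : ℤ => e n • fourierLp (T := T) 2 n)
      (ContinuousMap.toLp 2 AddCircle.haarAddCircle ℂ G) := by
    have := (ContinuousMap.toLp (E := ℂ) 2 (@AddCircle.haarAddCircle T _) ℂ).hasSum hG
    simpa [fourierLp] using! this
  have h2 : HasSum (fun n : ℤ => e n • fourierLp (T := T) 2 n)
      ((fourierBasis (T := T)).repr.symm E) := by
    have := (fourierBasis (T := T)).hasSum_repr_symm E
    simpa [hE] using this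
  rw [h2.unique h1]
  filter_upwards [ae_haar_preimage (ContinuousMap.coeFn_toLp (p := 2) (𝕜 := ℂ)
    (@AddCircle.haarAddCircle T _) G) s] with θ hθ
  rw [hθ]
  have h3 := (ContinuousMap.evalCLM ℂ (θ : AddCircle T)).hasSum hG
  have h4 := hφ θ
  simp only [fourier_coe_apply] at h4
  simp only [ContinuousMap.evalCLM_apply, ContinuousMap.coe_smul, Pi.smul_apply, smul_eq_mul,
    fourier_coe_apply] at h3
  exact h3.unique h4

theorem lp_two_norm_sq (E : lp (fun _ : ℤ => ℂ) 2) : ‖E‖ ^ 2 = ∑' n, ‖E n‖ ^ 2 := by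
  simpa using lp.norm_rpow_eq_tsum (p := 2) (by norm_num) E

theorem intervalIntegral_norm_sq_of_ae_eq {T : ℝ} [hT : Fact (0 < T)]
    (E : lp (fun _ : ℤ => ℂ) 2) {φ : ℝ → ℂ} (s : ℝ)
    (h : ∀ᵐ θ : ℝ ∂volume.restrict (Set.Ioc s (s + T)),
      ((fourierBasis (T := T)).repr.symm E) (θ : AddCircle T) = φ θ) :
    (∫ θ in s..(s + T), ‖φ θ‖ ^ 2) = T * ∑' n, ‖E n‖ ^ 2 := by
  have h1 : (∫ θ in s..(s + T), ‖φ θ‖ ^ 2) = ∫ θ in s..(s + T),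
      (fun x => ‖((fourierBasis (T := T)).repr.symm E) x‖ ^ 2) (θ : AddCircle T) := by
    rw [intervalIntegral.integral_of_le (by linarith [hT.out]),
      intervalIntegral.integral_of_le (by linarith [hT.out])]
    refine integral_congr_ae ?_
    filter_upwards [h] with θ hθ
    simp [hθ]
  refine (h1.trans (AddCircle.intervalIntegral_preimage T s
    fun x => ‖((fourierBasis (T := T)).repr.symm E) x‖ ^ 2)).trans ?_
  rw [AddCircle.volume_eq_smul_haarAddCircle,
    integral_smul_measure, ENNReal.toReal_ofReal hT.out.le, ← tsum_sq_fourierCoeff, smul_eq_mul]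
  congr 2
  ext n
  rw [← fourierBasis_repr]
  simp

theorem memlp_of_summable_norm {e : ℤ → ℂ} (he : Summable fun n => ‖e n‖) :
    Memℓp e 2 := by
  have h1 : Memℓp e 1 := memℓp_gen (by simpa using he)
  exact h1.of_exponent_ge (by norm_num)

theorem intervalIntegral_norm_sq_eq_tsum {T : ℝ} [hT : Fact (0 < T)] {e : ℤ → ℂ}
    (he : Summable fun n => ‖e n‖) {φ : ℝ → ℂ}
    (hφ : ∀ θ : ℝ, HasSum (fun n : ℤ => e n * fourier n (θ : AddCircle T)) (φ θ)) (s : ℝ) :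
    (∫ θ in s..(s + T), ‖φ θ‖ ^ 2) = T * ∑' n, ‖e n‖ ^ 2 :=
  intervalIntegral_norm_sq_of_ae_eq ⟨e, memlp_of_summable_norm he⟩ s
    (fourierBasis_repr_symm_ae_eq he _ (fun _ => rfl) hφ s)

theorem lp_two_tendsto_abel (D : lp (fun _ : ℤ => ℂ) 2) (r : ℕ → ℝ)
    (h0 : ∀ k, 0 ≤ r k) (h1 : ∀ k, r k ≤ 1) (hr : Tendsto r atTop (nhds 1))
    (R : ℕ → lp (fun _ : ℤ => ℂ) 2) (hR : ∀ k n, R k n = D n * (r k : ℂ) ^ n.natAbs) :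
    Tendsto R atTop (nhds D) := by
  rw [tendsto_iff_norm_sub_tendsto_zero]
  have hD : Summable fun n => ‖D n‖ ^ 2 := by
    simpa using (lp.memℓp D).summable (by norm_num)
  have key : Tendsto (fun k => ‖R k - D‖ ^ 2) atTop (nhds 0) := by
    simp_rw [lp_two_norm_sq]
    rw [← tsum_zero (α := ℝ) (β := ℤ)]
    refine tendsto_tsum_of_dominated_convergence hD (fun n => ?_)
      (Eventually.of_forall fun k n => ?_)
    · have : Tendsto (fun k => ‖D n * (r k : ℂ) ^ n.natAbs - D n‖ ^ 2) atTop
          (nhds (‖D n * ((1 : ℝ) : ℂ) ^ n.natAbs - D n‖ ^ 2)) :=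
        (((((continuous_ofReal.tendsto 1).comp hr).pow n.natAbs).const_mul (D n)).sub_const
          (D n)).norm.pow 2
      simpa [hR] using this
    · have h2 : ‖(r k : ℂ) ^ n.natAbs - 1‖ ≤ 1 := by
        rw [← ofReal_pow, ← ofReal_one, ← ofReal_sub, Complex.norm_real, Real.norm_eq_abs, abs_le]
        constructor <;>
          linarith [pow_nonneg (h0 k) n.natAbs, pow_le_one₀ (n := n.natAbs) (h0 k) (h1 k)]
      have h3 : (R k - D) n = D n * ((r k : ℂ) ^ n.natAbs - 1) := by
        simp [hR]; ring
      rw [h3, norm_mul, Real.norm_of_nonneg (by positivity)]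
      gcongr
      exact mul_le_of_le_one_right (norm_nonneg _) h2
  have := key.sqrt
  simpa [Real.sqrt_sq] using this

theorem differentiableOn_of_hasSum_pow {c : ℕ → ℂ} {Φ : ℂ → ℂ}
    (hΦ : ∀ z ∈ Metric.ball (0 : ℂ) 1, HasSum (fun k : ℕ => c k * z ^ k) (Φ z)) :
    DifferentiableOn ℂ Φ (Metric.ball 0 1) := by
  intro z hz
  obtain ⟨R, hzR, hR⟩ := exists_between (mem_ball_zero_iff.1 hz)
  have hR0 : 0 < R := (norm_nonneg z).trans_lt hzR
  have hRs : Summable fun k : ℕ => ‖c k * (R : ℂ) ^ k‖ :=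
    (hΦ R (by simpa [abs_of_pos hR0] using hR)).summable.norm
  have hd : DifferentiableOn ℂ (fun w => ∑' k : ℕ, c k * w ^ k) (Metric.ball 0 R) := by
    refine differentiableOn_tsum_of_summable_norm hRs (fun k => by fun_prop) Metric.isOpen_ball ?_
    intro k w hw
    have hw' := (mem_ball_zero_iff.1 hw).le
    simp only [norm_mul, norm_pow, Complex.norm_real, Real.norm_eq_abs, abs_of_pos hR0]
    gcongr
  have hmem : Metric.ball (0 : ℂ) R ∈ nhds z :=
    Metric.isOpen_ball.mem_nhds (mem_ball_zero_iff.2 hzR)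
  refine ((hd.differentiableAt hmem).congr_of_eventuallyEq ?_).differentiableWithinAt
  filter_upwards [hmem] with w hw
  exact (hΦ w (Metric.ball_subset_ball hR.le hw)).tsum_eq.symm

theorem norm_integral_diameter_le {Ψ : ℂ → ℂ} (hΨ : DifferentiableOn ℂ Ψ (Metric.ball 0 1))
    {r : ℝ} (hr0 : 0 ≤ r) (hr1 : r < 1) :
    ‖∫ x in (-r)..r, Ψ x‖ ≤ r * ∫ θ in (0 : ℝ)..π, ‖Ψ (r * Complex.exp (θ * I))‖ := by
  obtain ⟨P, hP⟩ := hΨ.isExactOn_ball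
  have hmem (θ : ℝ) : (r : ℂ) * Complex.exp (θ * I) ∈ Metric.ball (0 : ℂ) 1 := by
    simpa [Complex.norm_exp_ofReal_mul_I, abs_of_nonneg hr0] using hr1
  have hmem' (x : ℝ) (hx : x ∈ Set.uIcc (-r) r) : (x : ℂ) ∈ Metric.ball (0 : ℂ) 1 := by
    rw [Set.uIcc_of_le (by linarith)] at hx
    rw [mem_ball_zero_iff, Complex.norm_real, Real.norm_eq_abs]
    exact (abs_le.2 hx).trans_lt hr1
  have h1 : ∫ x in (-r)..r, Ψ x = P r - P (-r) := by
    have := intervalIntegral.integral_eq_sub_of_hasDerivAt (a := -r) (b := r)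
      (f := fun x : ℝ => P x) (f' := fun x : ℝ => Ψ x)
      (fun x hx => (hP _ (hmem' x hx)).comp_ofReal)
      (ContinuousOn.intervalIntegrable (hΨ.continuousOn.comp
        continuous_ofReal.continuousOn fun x hx => hmem' x hx))
    simpa using this
  have hc : Continuous fun θ : ℝ => Ψ (r * Complex.exp (θ * I)) :=
    hΨ.continuousOn.comp_continuous (by fun_prop) hmem
  have h2 : ∫ θ in (0 : ℝ)..π, Ψ (r * Complex.exp (θ * I)) * (r * (Complex.exp (θ * I) * I)) =
      P (-r) - P r := by
    have hd (θ : ℝ) : HasDerivAt (fun θ : ℝ => (r : ℂ) * Complex.exp (θ * I))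
        (r * (Complex.exp (θ * I) * I)) θ := by
      have := (((hasDerivAt_id (θ : ℂ)).mul_const I).cexp.const_mul (r : ℂ)).comp_ofReal
      simpa using this
    have := intervalIntegral.integral_eq_sub_of_hasDerivAt (a := 0) (b := π)
      (f := fun θ : ℝ => P (r * Complex.exp (θ * I)))
      (fun θ _ => (hP _ (hmem θ)).comp θ (hd θ))
      ((hc.mul (by fun_prop)).intervalIntegrable _ _)
    rw [this]
    simp [Complex.exp_pi_mul_I]
  rw [h1, norm_sub_rev, ← h2, ← intervalIntegral.integral_const_mul]
  refine (intervalIntegral.norm_integral_le_integral_norm pi_pos.le).trans_eq ?_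
  congr 1
  ext θ
  simp [abs_of_nonneg hr0, mul_comm]

open ComplexConjugate in
theorem integral_diameter_norm_sq_le {Φ : ℂ → ℂ} (hΦ : DifferentiableOn ℂ Φ (Metric.ball 0 1))
    {r : ℝ} (hr0 : 0 ≤ r) (hr1 : r < 1) :
    ∫ x in (-r)..r, ‖Φ x‖ ^ 2 ≤
      r / 2 * ∫ θ in (-π)..(-π + 2 * π), ‖Φ (r * Complex.exp (θ * I))‖ ^ 2 := by
  have hΨ : DifferentiableOn ℂ (fun z => Φ z * conj (Φ (conj z))) (Metric.ball 0 1) := by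
    refine hΦ.mul fun z hz => ?_
    have hz' : conj z ∈ Metric.ball (0 : ℂ) 1 := by simpa using hz
    have := (hΦ.differentiableAt (Metric.isOpen_ball.mem_nhds hz')).conj_conj
    simp only [Complex.conj_conj] at this
    exact this.differentiableWithinAt
  have hmem (θ : ℝ) : (r : ℂ) * Complex.exp (θ * I) ∈ Metric.ball (0 : ℂ) 1 := by
    simpa [Complex.norm_exp_ofReal_mul_I, abs_of_nonneg hr0] using hr1
  have hc : Continuous fun θ : ℝ => ‖Φ (r * Complex.exp (θ * I))‖ ^ 2 :=
    (hΦ.continuousOn.comp_continuous (by fun_prop) hmem).norm.pow 2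
  have hconj (θ : ℝ) : conj ((r : ℂ) * Complex.exp (θ * I)) =
      r * Complex.exp ((-θ : ℝ) * I) := by
    simp [← Complex.exp_conj]
  have hcn : Continuous fun θ : ℝ => ‖Φ (r * Complex.exp ((-θ : ℝ) * I))‖ ^ 2 :=
    hc.comp continuous_neg
  have h1 := norm_integral_diameter_le hΨ hr0 hr1
  have h2 : ∫ x in (-r)..r, Φ x * conj (Φ (conj (x : ℂ))) =
      ((∫ x in (-r)..r, ‖Φ x‖ ^ 2 : ℝ) : ℂ) := by
    rw [← intervalIntegral.integral_ofReal]
    congr 1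
    ext x
    rw [conj_ofReal, mul_conj, normSq_eq_norm_sq]
  rw [h2, Complex.norm_real] at h1
  refine (le_abs_self _).trans (h1.trans ?_)
  have h3 : ∫ θ in (0 : ℝ)..π, ‖Φ (r * Complex.exp (θ * I)) *
      conj (Φ (conj (r * Complex.exp (θ * I))))‖ ≤
      ∫ θ in (0 : ℝ)..π, (1 / 2 * ‖Φ (r * Complex.exp (θ * I))‖ ^ 2 +
        1 / 2 * ‖Φ (r * Complex.exp ((-θ : ℝ) * I))‖ ^ 2) := by
    refine intervalIntegral.integral_mono pi_pos.le ?_ ?_ fun θ => ?_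
    · refine Continuous.intervalIntegrable ?_ _ _
      exact (hΨ.continuousOn.comp_continuous (by fun_prop) hmem).norm
    · exact Continuous.intervalIntegrable (by fun_prop) _ _
    · simp only [hconj, norm_mul, RCLike.norm_conj]
      nlinarith [sq_nonneg (‖Φ (r * Complex.exp (θ * I))‖ -
        ‖Φ (r * Complex.exp ((-θ : ℝ) * I))‖)]
  have h4 : ∫ θ in (0 : ℝ)..π, (1 / 2 * ‖Φ (r * Complex.exp (θ * I))‖ ^ 2 +
        1 / 2 * ‖Φ (r * Complex.exp ((-θ : ℝ) * I))‖ ^ 2) =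
      1 / 2 * ∫ θ in (-π)..(-π + 2 * π), ‖Φ (r * Complex.exp (θ * I))‖ ^ 2 := by
    rw [intervalIntegral.integral_add ((hc.const_mul _).intervalIntegrable _ _)
      ((hcn.const_mul _).intervalIntegrable _ _), intervalIntegral.integral_const_mul,
      intervalIntegral.integral_const_mul,
      intervalIntegral.integral_comp_neg (fun θ => ‖Φ (r * Complex.exp (θ * I))‖ ^ 2),
      ← mul_add, add_comm, neg_zero, show -π + 2 * π = π by ring,
      intervalIntegral.integral_add_adjacent_intervals (hc.intervalIntegrable _ _)
        (hc.intervalIntegrable _ _)]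
  calc _ ≤ r * (1 / 2 * ∫ θ in (-π)..(-π + 2 * π), ‖Φ (r * Complex.exp (θ * I))‖ ^ 2) := by
        rw [← h4]; exact mul_le_mul_of_nonneg_left h3 hr0
    _ = _ := by ring

open ComplexConjugate in
/-- The Fourier coefficients of `∑ aₖ zᵏ + conj (∑ bₖ zᵏ)` on the unit circle, when `b 0 = 0`. -/
noncomputable def harmonicCoeff (a b : ℕ → ℂ) : ℤ → ℂ
  | .ofNat n => a n
  | .negSucc n => conj (b (n + 1))

@[simp] theorem harmonicCoeff_natCast (a b : ℕ → ℂ) (n : ℕ) : harmonicCoeff a b n = a n := rfl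

open ComplexConjugate in
@[simp] theorem harmonicCoeff_neg_succ (a b : ℕ → ℂ) (n : ℕ) :
    harmonicCoeff a b (-(n + 1 : ℤ)) = conj (b (n + 1)) := by
  rw [← Int.negSucc_eq]; rfl

theorem harmonicCoeff_norm_sq_hasSum {a b : ℕ → ℂ} (hb0 : b 0 = 0) {A B : ℝ}
    (ha : HasSum (fun k => ‖a k‖ ^ 2) A) (hb : HasSum (fun k => ‖b k‖ ^ 2) B) :
    HasSum (fun n => ‖harmonicCoeff a b n‖ ^ 2) (A + B) := by
  refine HasSum.of_nat_of_neg_add_one (by simpa using ha) ?_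
  simp only [harmonicCoeff_neg_succ, RCLike.norm_conj]
  simpa [hb0] using (hasSum_nat_add_iff' 1).2 hb

theorem summable_norm_sq_of_harmonicCoeff {a b : ℕ → ℂ}
    (h : Summable fun n => ‖harmonicCoeff a b n‖ ^ 2) :
    (Summable fun k => ‖a k‖ ^ 2) ∧ Summable fun k => ‖b k‖ ^ 2 := by
  constructor
  · exact h.comp_injective (i := ((↑) : ℕ → ℤ)) Nat.cast_injective
  · rw [← summable_nat_add_iff 1]
    have := h.comp_injective (i := fun n : ℕ => -(n + 1 : ℤ)) fun m n hmn => by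
      simpa using hmn
    simpa only [Function.comp_def, harmonicCoeff_neg_succ, RCLike.norm_conj] using this

local instance : Fact (0 < 2 * π) := ⟨Real.two_pi_pos⟩

theorem fourier_two_pi_apply (n : ℤ) (θ : ℝ) :
    fourier n (θ : AddCircle (2 * π)) = Complex.exp (θ * I) ^ n := by
  rw [fourier_coe_apply, ← Complex.exp_int_mul]
  congr 1
  have : (π : ℂ) ≠ 0 := ofReal_ne_zero.2 pi_ne_zero
  push_cast
  field_simp

theorem ofReal_mul_exp_mem_ball {r : ℝ} (hr : |r| < 1) (θ : ℝ) :
    (r : ℂ) * Complex.exp (θ * I) ∈ Metric.ball (0 : ℂ) 1 := by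
  simpa [Complex.norm_exp_ofReal_mul_I] using hr

open ComplexConjugate in
theorem hasSum_harmonicCoeff {a b : ℕ → ℂ} {h g : ℂ → ℂ}
    (hh : ∀ z ∈ Metric.ball (0 : ℂ) 1, HasSum (fun k : ℕ => a k * z ^ k) (h z))
    (hg : ∀ z ∈ Metric.ball (0 : ℂ) 1, HasSum (fun k : ℕ => b k * z ^ k) (g z))
    (hb0 : b 0 = 0) {r : ℝ} (hr : |r| < 1) (θ : ℝ) :
    HasSum (fun n : ℤ => harmonicCoeff a b n * (r : ℂ) ^ n.natAbs *
        fourier n (θ : AddCircle (2 * π)))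
      (h (r * Complex.exp (θ * I)) + conj (g (r * Complex.exp (θ * I)))) := by
  have hz := ofReal_mul_exp_mem_ball hr θ
  simp_rw [fourier_two_pi_apply]
  refine HasSum.of_nat_of_neg_add_one ?_ ?_
  · simpa [mul_pow, mul_assoc] using hh _ hz
  · have h1 := (hasSum_nat_add_iff' 1).2 (Complex.hasSum_conj'.2 (hg _ hz))
    simp only [Finset.range_one, Finset.sum_singleton, hb0, zero_mul, map_zero, sub_zero] at h1
    convert! h1 using 2 with n
    have h2 : (-(n + 1 : ℤ)).natAbs = n + 1 := by lia
    have h3 : conj (Complex.exp (θ * I)) = (Complex.exp (θ * I))⁻¹ := by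
      rw [← Complex.exp_conj, ← Complex.exp_neg]
      simp
    have h4 : Complex.exp (θ * I) ^ (-(n + 1 : ℤ)) = (Complex.exp (θ * I))⁻¹ ^ (n + 1) := by
      rw [zpow_neg, inv_pow]
      norm_cast
    rw [harmonicCoeff_neg_succ, h2, h4, map_mul, map_pow, map_mul, h3, conj_ofReal, mul_pow,
      mul_assoc]

open ComplexConjugate in
theorem summable_norm_harmonicCoeff_mul_pow {a b : ℕ → ℂ} {h g : ℂ → ℂ}
    (hh : ∀ z ∈ Metric.ball (0 : ℂ) 1, HasSum (fun k : ℕ => a k * z ^ k) (h z))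
    (hg : ∀ z ∈ Metric.ball (0 : ℂ) 1, HasSum (fun k : ℕ => b k * z ^ k) (g z))
    (hb0 : b 0 = 0) {r : ℝ} (hr : |r| < 1) :
    Summable fun n : ℤ => ‖harmonicCoeff a b n * (r : ℂ) ^ n.natAbs‖ := by
  simpa [fourier_two_pi_apply] using (hasSum_harmonicCoeff hh hg hb0 hr 0).summable.norm

/-- The **Riesz–Fejér inequality** on `H²`, for the diameter `[-r, r]`. -/
theorem riesz_fejer_of_summable {c : ℕ → ℂ} {Φ : ℂ → ℂ}
    (hΦ : ∀ z ∈ Metric.ball (0 : ℂ) 1, HasSum (fun k : ℕ => c k * z ^ k) (Φ z))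
    {C : ℝ} (hc : HasSum (fun k => ‖c k‖ ^ 2) C) {r : ℝ} (hr0 : 0 ≤ r) (hr1 : r < 1) :
    ∫ x in (-r)..r, ‖Φ x‖ ^ 2 ≤ π * C := by
  have hr : |r| < 1 := by rwa [abs_of_nonneg hr0]
  have hz : ∀ z ∈ Metric.ball (0 : ℂ) 1, HasSum (fun k : ℕ => (fun _ => 0 : ℕ → ℂ) k * z ^ k)
      ((fun _ => 0 : ℂ → ℂ) z) := fun z _ => by simp
  have hsum := summable_norm_harmonicCoeff_mul_pow hΦ hz rfl hr
  have hp := intervalIntegral_norm_sq_eq_tsum hsum (hasSum_harmonicCoeff hΦ hz rfl hr) (-π)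
  simp only [map_zero, add_zero] at hp
  have hC : HasSum (fun n => ‖harmonicCoeff c (fun _ => 0) n‖ ^ 2) (C + 0) :=
    harmonicCoeff_norm_sq_hasSum rfl hc (by simp)
  have hle (n : ℤ) : ‖harmonicCoeff c (fun _ => 0) n * (r : ℂ) ^ n.natAbs‖ ^ 2 ≤
      ‖harmonicCoeff c (fun _ => 0) n‖ ^ 2 := by
    rw [norm_mul, norm_pow, Complex.norm_real, Real.norm_eq_abs]
    gcongr
    exact mul_le_of_le_one_right (norm_nonneg _) (pow_le_one₀ (abs_nonneg r) hr.le)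
  have hS : ∑' n, ‖harmonicCoeff c (fun _ => 0) n * (r : ℂ) ^ n.natAbs‖ ^ 2 ≤ C := by
    rw [← add_zero C, ← hC.tsum_eq]
    exact (hC.summable.of_nonneg_of_le (fun _ => by positivity) hle).tsum_le_tsum hle hC.summable
  have hC0 : 0 ≤ C := hc.nonneg fun _ => by positivity
  calc _ ≤ r / 2 * (2 * π * ∑' n, ‖harmonicCoeff c (fun _ => 0) n * (r : ℂ) ^ n.natAbs‖ ^ 2) :=
        (integral_diameter_norm_sq_le (differentiableOn_of_hasSum_pow hΦ) hr0 hr1).trans_eq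
          (by rw [hp])
    _ ≤ 1 / 2 * (2 * π * C) := by gcongr
    _ = π * C := by ring

theorem integral_le_of_forall_lt_one {φ : ℝ → ℝ} {M : ℝ}
    (h : ∀ r : ℝ, 0 ≤ r → r < 1 → ∫ x in (-r)..r, φ x ≤ M) : ∫ x in (-1)..1, φ x ≤ M := by
  by_cases hφ : IntervalIntegrable φ volume (-1) 1
  · have hr : Tendsto (fun r : ℝ => r) (nhdsWithin 1 (Set.Iio 1)) (nhds 1) :=
      tendsto_id'.2 inf_le_left
    have ht := (aecover_Ioc_of_Ioc (μ := volume) hr.neg hr).integral_tendsto_of_countably_generated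
      (f := φ) ((intervalIntegrable_iff_integrableOn_Ioc_of_le (by norm_num)).1 hφ)
    rw [intervalIntegral.integral_of_le (by norm_num)]
    refine le_of_tendsto ht ?_
    filter_upwards [Ioo_mem_nhdsLT (zero_lt_one' ℝ)] with r hr
    rw [Measure.restrict_restrict measurableSet_Ioc, Set.inter_eq_left.2
      (Set.Ioc_subset_Ioc (by linarith [hr.2]) hr.2.le),
      ← intervalIntegral.integral_of_le (by linarith [hr.1])]
    exact h r hr.1.le hr.2
  · rw [intervalIntegral.integral_undef hφ]
    simpa using h 0 le_rfl one_pos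

open ComplexConjugate in
theorem summable_harmonicCoeff_norm_sq {a b : ℕ → ℂ} {h g : ℂ → ℂ}
    (hh : ∀ z ∈ Metric.ball (0 : ℂ) 1, HasSum (fun k : ℕ => a k * z ^ k) (h z))
    (hg : ∀ z ∈ Metric.ball (0 : ℂ) 1, HasSum (fun k : ℕ => b k * z ^ k) (g z))
    (hb0 : b 0 = 0) {C : ℝ} (hC : ∀ r : ℝ, 0 ≤ r → r < 1 →
      ∫ θ in (0 : ℝ)..(2 * π), ‖h (r * Complex.exp (θ * I)) +
        conj (g (r * Complex.exp (θ * I)))‖ ^ 2 ≤ C) :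
    Summable fun n => ‖harmonicCoeff a b n‖ ^ 2 := by
  refine summable_of_sum_le (c := C / (2 * π)) (fun _ => by positivity) fun u => ?_
  have ht : Tendsto (fun r : ℝ => ∑ n ∈ u, ‖harmonicCoeff a b n * (r : ℂ) ^ n.natAbs‖ ^ 2)
      (nhdsWithin 1 (Set.Iio 1)) (nhds (∑ n ∈ u, ‖harmonicCoeff a b n‖ ^ 2)) := by
    have : Continuous fun r : ℝ => ∑ n ∈ u, ‖harmonicCoeff a b n * (r : ℂ) ^ n.natAbs‖ ^ 2 := by
      fun_prop
    simpa using (this.tendsto 1).mono_left nhdsWithin_le_nhds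
  refine le_of_tendsto ht ?_
  filter_upwards [Ioo_mem_nhdsLT (zero_lt_one' ℝ)] with r hr
  have hr' : |r| < 1 := by rw [abs_of_pos hr.1]; exact hr.2
  have hsum := summable_norm_harmonicCoeff_mul_pow hh hg hb0 hr'
  have hp := intervalIntegral_norm_sq_eq_tsum hsum (hasSum_harmonicCoeff hh hg hb0 hr') 0
  rw [zero_add] at hp
  rw [le_div_iff₀' Real.two_pi_pos]
  refine le_trans ?_ (hp.symm.trans_le (hC r hr.1.le hr.2))
  gcongr
  refine Summable.sum_le_tsum u (fun _ _ => by positivity) ?_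
  simpa using (memlp_of_summable_norm hsum).summable (by norm_num)

open ComplexConjugate in
/-- Parseval's identity for the radial boundary values of a function in `h²`. -/
theorem integral_norm_sq_boundary {a b : ℕ → ℂ} {h g : ℂ → ℂ} {F : ℝ → ℂ}
    (hh : ∀ z ∈ Metric.ball (0 : ℂ) 1, HasSum (fun k : ℕ => a k * z ^ k) (h z))
    (hg : ∀ z ∈ Metric.ball (0 : ℂ) 1, HasSum (fun k : ℕ => b k * z ^ k) (g z))
    (hb0 : b 0 = 0) (hs : Summable fun n => ‖harmonicCoeff a b n‖ ^ 2)
    (hF : ∀ᵐ θ : ℝ, Tendsto (fun r : ℝ => h (r * Complex.exp (θ * I)) +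
        conj (g (r * Complex.exp (θ * I)))) (nhdsWithin 1 (Set.Iio 1)) (nhds (F θ))) :
    ∫ θ in (0 : ℝ)..(2 * π), ‖F θ‖ ^ 2 = 2 * π * ∑' n, ‖harmonicCoeff a b n‖ ^ 2 := by
  set r : ℕ → ℝ := fun k => 1 - 1 / ((k : ℝ) + 1) with hr_def
  have hr0 (k : ℕ) : 0 ≤ r k := by
    simp only [hr_def, sub_nonneg]
    exact div_le_one_of_le₀ (by simp) (by positivity)
  have hr1 (k : ℕ) : r k < 1 := by
    simp only [hr_def, sub_lt_self_iff]
    positivity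
  have hr_abs (k : ℕ) : |r k| < 1 := by rw [abs_of_nonneg (hr0 k)]; exact hr1 k
  have hr : Tendsto r atTop (nhds 1) := by
    simpa [hr_def] using tendsto_one_div_add_atTop_nhds_zero_nat.const_sub (1 : ℝ)
  have hr' : Tendsto r atTop (nhdsWithin 1 (Set.Iio 1)) :=
    tendsto_nhdsWithin_iff.2 ⟨hr, Eventually.of_forall hr1⟩
  have hsum (k : ℕ) := summable_norm_harmonicCoeff_mul_pow hh hg hb0 (hr_abs k)
  let D : lp (fun _ : ℤ => ℂ) 2 := ⟨harmonicCoeff a b, memℓp_gen (by simpa using hs)⟩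
  let R : ℕ → lp (fun _ : ℤ => ℂ) 2 := fun k =>
    ⟨fun n => harmonicCoeff a b n * (r k : ℂ) ^ n.natAbs, memlp_of_summable_norm (hsum k)⟩
  have hR : Tendsto R atTop (nhds D) :=
    lp_two_tendsto_abel D r hr0 (fun k => (hr1 k).le) hr R fun _ _ => rfl
  have hL := ((fourierBasis (T := 2 * π)).repr.symm.continuous.tendsto D).comp hR
  obtain ⟨ns, hns, hae⟩ := (tendstoInMeasure_of_tendsto_Lp hL).exists_seq_tendsto_ae
  have hRφ (k : ℕ) := fourierBasis_repr_symm_ae_eq (hsum k) (R k) (fun _ => rfl)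
    (hasSum_harmonicCoeff hh hg hb0 (hr_abs k)) 0
  have hDF : ∀ᵐ θ : ℝ ∂volume.restrict (Set.Ioc 0 (0 + 2 * π)),
      ((fourierBasis (T := 2 * π)).repr.symm D) (θ : AddCircle (2 * π)) = F θ := by
    filter_upwards [ae_all_iff.2 hRφ, ae_restrict_of_ae hF, ae_haar_preimage hae 0]
      with θ h1 h2 h3
    refine tendsto_nhds_unique h3 ?_
    refine ((h2.comp hr').comp hns.tendsto_atTop).congr fun k => ?_
    exact (h1 (ns k)).symm
  simpa using intervalIntegral_norm_sq_of_ae_eq D 0 hDF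

/-- If `f = h + conj g` is harmonic on the unit disk, with `h(z) = Σ aₖ zᵏ`,
`g(z) = Σ_{k≥1} bₖ zᵏ`, and `f ∈ h²` with a.e. radial boundary values `F`, then for all real `t`,
`∫_{-1}^{1} |f(x e^{it})|² dx ≤ (1/2) ∫₀^{2π} |F(θ)|² dθ + 2π Re (Σ_{k≥1} aₖ bₖ e^{2ikt})`. -/
theorem harmonic_riesz_fejer_coeff (h g f : ℂ → ℂ) (a b : ℕ → ℂ) (F : ℝ → ℂ)
    (hh : ∀ z ∈ Metric.ball (0:ℂ) 1, HasSum (fun k : ℕ => a k * z ^ k) (h z))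
    (hg : ∀ z ∈ Metric.ball (0:ℂ) 1, HasSum (fun k : ℕ => b k * z ^ k) (g z))
    (hb0 : b 0 = 0)
    (hf : ∀ z ∈ Metric.ball (0:ℂ) 1, f z = h z + starRingEnd ℂ (g z))
    (hH2 : ∃ C : ℝ, ∀ r : ℝ, 0 ≤ r → r < 1 →
      (∫ θ in (0:ℝ)..(2 * π), ‖f ((r : ℂ) * Complex.exp (θ * Complex.I))‖ ^ 2) ≤ C)
    (hF : ∀ᵐ θ : ℝ, Tendsto (fun r : ℝ => f ((r : ℂ) * Complex.exp (θ * Complex.I)))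
      (nhdsWithin 1 (Set.Iio 1)) (nhds (F θ)))
    (t : ℝ)
    (hsum : Summable fun k : ℕ => a k * b k * Complex.exp (2 * k * t * Complex.I)) :
    (∫ x in (-1:ℝ)..1, ‖f ((x : ℂ) * Complex.exp (t * Complex.I))‖ ^ 2) ≤
      (1 / 2) * (∫ θ in (0:ℝ)..(2 * π), ‖F θ‖ ^ 2) +
        2 * π * (∑' k : ℕ, a k * b k * Complex.exp (2 * k * t * Complex.I)).re := by
  simp only [one_div]
  have hf' {r : ℝ} (hr : |r| < 1) (θ : ℝ) := hf _ (ofReal_mul_exp_mem_ball hr θ)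
  obtain ⟨C, hC⟩ := hH2
  have hs : Summable fun n => ‖harmonicCoeff a b n‖ ^ 2 := by
    refine summable_harmonicCoeff_norm_sq hh hg hb0 (C := C) fun r hr0 hr1 => ?_
    refine le_trans (le_of_eq ?_) (hC r hr0 hr1)
    simp only [hf' (show |r| < 1 by rwa [abs_of_nonneg hr0])]
  have hF' : ∀ᵐ θ : ℝ, Tendsto (fun r : ℝ => h (r * Complex.exp (θ * I)) +
      starRingEnd ℂ (g (r * Complex.exp (θ * I)))) (nhdsWithin 1 (Set.Iio 1)) (nhds (F θ)) := by
    filter_upwards [hF] with θ hθ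
    refine hθ.congr' ?_
    filter_upwards [Ioo_mem_nhdsLT (zero_lt_one' ℝ)] with r hr
    exact hf' (by rw [abs_of_pos hr.1]; exact hr.2) θ
  obtain ⟨ha2, hb2⟩ := summable_norm_sq_of_harmonicCoeff hs
  rw [integral_norm_sq_boundary hh hg hb0 hs hF',
    (harmonicCoeff_norm_sq_hasSum hb0 ha2.hasSum hb2.hasSum).tsum_eq]
  set u : ℂ := Complex.exp (t * I) with hu
  have hu1 : ‖u‖ = 1 := Complex.norm_exp_ofReal_mul_I t
  have hc : HasSum (fun k => ‖a k * u ^ k + starRingEnd ℂ (b k * u ^ k)‖ ^ 2)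
      (∑' k, ‖a k‖ ^ 2 + ∑' k, ‖b k‖ ^ 2 +
        2 * (∑' k : ℕ, a k * b k * Complex.exp (2 * k * t * I)).re) := by
    convert! (ha2.hasSum.add hb2.hasSum).add
      ((Complex.hasSum_re hsum.hasSum).mul_left 2) using 2 with k
    have h1 : Complex.exp (2 * k * t * I) = u ^ k * u ^ k := by
      rw [hu, ← Complex.exp_nat_mul, ← Complex.exp_add]
      ring_nf
    rw [h1, ← normSq_eq_norm_sq, normSq_add, Complex.conj_conj, normSq_conj, normSq_eq_norm_sq,
      normSq_eq_norm_sq, norm_mul, norm_mul, norm_pow, hu1, one_pow, mul_one, mul_one]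
    ring_nf
  have hΦ : ∀ z ∈ Metric.ball (0 : ℂ) 1,
      HasSum (fun k : ℕ => (a k * u ^ k + starRingEnd ℂ (b k * u ^ k)) * z ^ k)
        (h (z * u) + starRingEnd ℂ (g (starRingEnd ℂ z * u))) := by
    intro z hz
    have h1 := hh (z * u) (by simpa [hu1] using hz)
    have h2 := Complex.hasSum_conj'.2 (hg (starRingEnd ℂ z * u) (by simpa [hu1] using hz))
    convert! h1.add h2 using 2 with k
    simp only [map_mul, map_pow, Complex.conj_conj]
    ring
  have hmain := integral_le_of_forall_lt_one fun r hr0 hr1 =>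
    riesz_fejer_of_summable hΦ hc hr0 hr1
  have hlhs : ∫ x in (-1 : ℝ)..1, ‖f ((x : ℂ) * u)‖ ^ 2 =
      ∫ x in (-1 : ℝ)..1, ‖h (x * u) + starRingEnd ℂ (g (starRingEnd ℂ (x : ℂ) * u))‖ ^ 2 := by
    rw [intervalIntegral.integral_of_le (by norm_num), intervalIntegral.integral_of_le
      (by norm_num), integral_Ioc_eq_integral_Ioo, integral_Ioc_eq_integral_Ioo]
    refine setIntegral_congr_fun measurableSet_Ioo fun x hx => ?_
    simp only [conj_ofReal, hu, hf' (abs_lt.2 hx)]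
  rw [hlhs]
  refine hmain.trans_eq ?_
  ring
end
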